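/- Let X be a compact Hausdorff space, X₀ ⊆ X a dense subset, and A ⊆ C(X) a norm-bounded family such that whenever (f_n) is a sequence in A and (x_m) a sequence in X₀ for which both iterated limits lim_n lim_m f_n(x_m) and lim_m lim_n f_n(x_m) exist, they are equal. Then every function ψ : X → ℝ lying in the closure of A in the product topology of ℝ^X is continuous, and moreover there exists a sequence (f_k) of elements of A converging to ψ pointwise on X. -/

import Mathlib

open BoundedContinuousFunction MeasureTheory Filter Topology

noncomputable section

lemma approx_fin {X : Type*} [TopologicalSpace X] {A : Set C(X, ℝ)} {ψ : X → ℝ}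
    (hψ : ψ ∈ closure ((fun f : C(X, ℝ) => (f : X → ℝ)) '' A)) (T : Set X) (hT : T.Finite)
    {δ : ℝ} (hδ : 0 < δ) : ∃ f ∈ A, ∀ t ∈ T, |f t - ψ t| < δ := by
  have hU : {g : X → ℝ | ∀ t ∈ T, |g t - ψ t| < δ} ∈ 𝓝 ψ := by
    have : ∀ t ∈ T, ∀ᶠ g : X → ℝ in 𝓝 ψ, |g t - ψ t| < δ := by
      intro t _
      have hc : Continuous (fun g : X → ℝ => |g t - ψ t|) := by fun_prop
      exact hc.continuousAt.eventually (gt_mem_nhds (by simpa using hδ))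
    exact (Filter.eventually_all_finite hT).2 this
  obtain ⟨g, hg, f, hf, rfl⟩ := mem_closure_iff_nhds.1 hψ _ hU
  exact ⟨f, hf, hg⟩

lemma bdd_of_closure {X : Type*} [TopologicalSpace X] [CompactSpace X] {A : Set C(X, ℝ)}
    {C : ℝ} (hC : ∀ f ∈ A, ‖f‖ ≤ C) {ψ : X → ℝ}
    (hψ : ψ ∈ closure ((fun f : C(X, ℝ) => (f : X → ℝ)) '' A)) (x : X) :
    ψ x ∈ Set.Icc (-C) C := by
  have hcl : IsClosed {g : X → ℝ | g x ∈ Set.Icc (-C) C} :=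
    isClosed_Icc.preimage (continuous_apply x)
  refine closure_minimal ?_ hcl hψ
  rintro _ ⟨f, hf, rfl⟩
  have := (f.norm_coe_le_norm x).trans (hC f hf)
  rw [Real.norm_eq_abs] at this
  exact abs_le.1 this

lemma closure_continuous
    {X : Type*} [TopologicalSpace X] [CompactSpace X]
    (X₀ : Set X) (hX₀ : Dense X₀) (A : Set C(X, ℝ))
    (hbdd : ∃ C, ∀ f ∈ A, ‖f‖ ≤ C)
    (hdl : ∀ (f : ℕ → C(X, ℝ)) (x : ℕ → X), (∀ n, f n ∈ A) → (∀ m, x m ∈ X₀) →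
      ∀ (L K : ℕ → ℝ) (a b : ℝ),
        (∀ n, Tendsto (fun m => f n (x m)) atTop (nhds (L n))) →
        Tendsto L atTop (nhds a) →
        (∀ m, Tendsto (fun n => f n (x m)) atTop (nhds (K m))) →
        Tendsto K atTop (nhds b) →
        a = b)
    (ψ : X → ℝ)
    (hψ : ψ ∈ closure ((fun f : C(X, ℝ) => (f : X → ℝ)) '' A)) :
    Continuous ψ := by
  obtain ⟨C, hC⟩ := hbdd
  have claim : ∀ x : X, ∀ ε > 0, ∃ U, IsOpen U ∧ x ∈ U ∧ ∀ y ∈ U ∩ X₀, |ψ y - ψ x| ≤ ε := by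
    intro x ε hε
    by_contra! hcon
    obtain ⟨s, hP, hr⟩ := exists_seq_of_forall_finset_exists
      (fun p : ℕ × C(X, ℝ) × X => p.2.1 ∈ A ∧ p.2.2 ∈ X₀ ∧ ε < |ψ p.2.2 - ψ x| ∧
        |p.2.1 x - ψ x| < 1 / ((p.1 : ℝ) + 1))
      (fun p q => p.1 < q.1 ∧ |q.2.1 p.2.2 - ψ p.2.2| < 1 / ((q.1 : ℝ) + 1) ∧
        |p.2.1 q.2.2 - p.2.1 x| < 1 / ((q.1 : ℝ) + 1)) (by
      intro S _
      obtain ⟨N, hN⟩ : ∃ N : ℕ, ∀ p ∈ S, p.1 < N :=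
        ⟨S.sup (fun p => p.1) + 1, fun p hp => Nat.lt_succ_of_le
          (Finset.le_sup (f := fun p : ℕ × C(X, ℝ) × X => p.1) hp)⟩
      have hpos : (0 : ℝ) < 1 / ((N : ℝ) + 1) := by positivity
      obtain ⟨f, hfA, hf⟩ := approx_fin hψ
        (insert x ((fun p : ℕ × C(X, ℝ) × X => p.2.2) '' (S : Set (ℕ × C(X, ℝ) × X))))
        ((S.finite_toSet.image _).insert x) hpos
      have hV : IsOpen (⋂ p ∈ S, {y : X | |p.2.1 y - p.2.1 x| < 1 / ((N : ℝ) + 1)}) := by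
        refine isOpen_biInter_finset fun p _ => ?_
        exact isOpen_lt (by fun_prop) continuous_const
      obtain ⟨y, ⟨hyV, hyX⟩, hy⟩ := hcon _ hV (by simpa using fun _ _ _ _ => by positivity)
      refine ⟨(N, f, y), ⟨hfA, hyX, hy, hf x (Set.mem_insert _ _)⟩, fun p hp => ⟨hN p hp, ?_, ?_⟩⟩
      · exact hf _ (Set.mem_insert_of_mem _ ⟨p, hp, rfl⟩)
      · exact Set.mem_iInter₂.1 hyV p hp)
    have hmono : StrictMono (fun n => (s n).1) := fun m n h => (hr m n h).1
    have hδ : Tendsto (fun n => 1 / (((s n).1 : ℝ) + 1)) atTop (𝓝 0) :=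
      tendsto_one_div_add_atTop_nhds_zero_nat.comp hmono.tendsto_atTop
    obtain ⟨b, -, φ, hφ, hb⟩ := (isCompact_Icc (a := -C) (b := C)).tendsto_subseq
      (x := fun n => ψ (s n).2.2) (fun n => bdd_of_closure hC hψ _)
    have key : ∀ (u : ℕ → ℝ) (l : ℝ), (∀ᶠ n in atTop, |u n - l| ≤ 1 / (((s n).1 : ℝ) + 1)) →
        Tendsto u atTop (𝓝 l) := by
      intro u l h
      rw [tendsto_iff_dist_tendsto_zero]
      exact squeeze_zero' (Eventually.of_forall fun _ => dist_nonneg) h hδ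
    have := hdl (fun n => (s n).2.1) (fun m => (s (φ m)).2.2) (fun n => (hP n).1)
      (fun m => (hP _).2.1) (fun n => (s n).2.1 x) (fun m => ψ (s (φ m)).2.2) (ψ x) b
      (fun n => by
        refine (key (fun m => (s n).2.1 (s m).2.2) _ ?_).comp hφ.tendsto_atTop
        filter_upwards [eventually_gt_atTop n] with m hm using (hr n m hm).2.2.le)
      (key _ _ (Eventually.of_forall fun n => (hP n).2.2.2.le))
      (fun m => by
        refine key _ _ ?_
        filter_upwards [eventually_gt_atTop (φ m)] with n hn using (hr _ n hn).2.1.le)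
      hb
    have h2 : ε ≤ |b - ψ x| := by
      refine ge_of_tendsto' ((hb.sub_const (ψ x)).abs) fun n => ((hP (φ n)).2.2.1).le
    rw [this] at h2
    simp at h2
    linarith
  rw [continuous_iff_continuousAt]
  intro x
  rw [Metric.continuousAt_iff']
  intro ε hε
  obtain ⟨U, hU, hxU, h⟩ := claim x (ε / 3) (by positivity)
  filter_upwards [hU.mem_nhds hxU] with y hy
  obtain ⟨V, hV, hyV, h'⟩ := claim y (ε / 3) (by positivity)
  obtain ⟨z, ⟨hzU, hzV⟩, hz⟩ := hX₀.inter_open_nonempty _ (hU.inter hV) ⟨y, hy, hyV⟩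
  have h1 := h z ⟨hzU, hz⟩
  have h2 := h' z ⟨hzV, hz⟩
  rw [Real.dist_eq, abs_lt]
  rw [abs_le] at h1 h2
  constructor <;> linarith [h1.1, h1.2, h2.1, h2.2]

lemma countable_tight {X : Type*} [TopologicalSpace X] [CompactSpace X] {A : Set C(X, ℝ)}
    {ψ : X → ℝ} (hc : Continuous ψ)
    (hψ : ψ ∈ closure ((fun f : C(X, ℝ) => (f : X → ℝ)) '' A)) :
    ∃ D ⊆ A, D.Countable ∧ ψ ∈ closure ((fun f : C(X, ℝ) => (f : X → ℝ)) '' D) := by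
  have h1 : ∀ n k : ℕ, ∃ F : Set C(X, ℝ), F ⊆ A ∧ F.Finite ∧ ∀ x : Fin n → X, ∃ f ∈ F,
      ∀ i, |f (x i) - ψ (x i)| < 1 / ((k : ℝ) + 1) := by
    intro n k
    obtain ⟨F, hF, hFf, hcov⟩ := (isCompact_univ (X := Fin n → X)).elim_finite_subcover_image
      (b := A) (c := fun f => {x | ∀ i, |f (x i) - ψ (x i)| < 1 / ((k : ℝ) + 1)})
      (fun f _ => by
        simp only [Set.ofPred_forall]
        exact isOpen_iInter_of_finite fun i => isOpen_lt (by fun_prop) continuous_const)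
      (fun x _ => by
        obtain ⟨f, hf, hfx⟩ := approx_fin hψ (Set.range x) (Set.finite_range x)
          (δ := 1 / ((k : ℝ) + 1)) (by positivity)
        exact Set.mem_biUnion hf fun i => hfx _ ⟨i, rfl⟩)
    refine ⟨F, hF, hFf, fun x => ?_⟩
    simpa using hcov (Set.mem_univ x)
  choose F hFA hFf hF using h1
  refine ⟨⋃ n, ⋃ k, F n k, Set.iUnion₂_subset hFA,
    Set.countable_iUnion fun n => Set.countable_iUnion fun k => (hFf n k).countable, ?_⟩
  rw [mem_closure_iff_nhds]
  intro U hU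
  rw [nhds_pi, Filter.mem_pi] at hU
  obtain ⟨I, hI, t, ht, hsub⟩ := hU
  choose δ hδ hball using fun i => Metric.mem_nhds_iff.1 (ht i)
  obtain ⟨k, hk⟩ : ∃ k : ℕ, ∀ i ∈ I, 1 / ((k : ℝ) + 1) < δ i := by
    have : ∀ᶠ k : ℕ in atTop, ∀ i ∈ I, 1 / ((k : ℝ) + 1) < δ i :=
      (Filter.eventually_all_finite hI).2 fun i _ =>
        tendsto_one_div_add_atTop_nhds_zero_nat.eventually (gt_mem_nhds (hδ i))
    exact this.exists
  obtain ⟨n, x, hx⟩ := hI.fin_param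
  obtain ⟨f, hf, hfx⟩ := hF n k x
  refine ⟨f, hsub ?_, f, Set.mem_iUnion₂.2 ⟨n, k, hf⟩, rfl⟩
  intro i hi
  apply hball
  obtain ⟨j, rfl⟩ : i ∈ Set.range x := hx.2 ▸ hi
  exact (hfx j).trans (hk _ hi)

lemma eq_of_eq_dense {X : Type*} [TopologicalSpace X] [CompactSpace X] (D : Set C(X, ℝ))
    (hD : D.Countable) : ∃ S : Set X, S.Countable ∧ ∀ φ ψ : X → ℝ, Continuous φ → Continuous ψ →
      φ ∈ closure ((fun f : C(X, ℝ) => (f : X → ℝ)) '' D) →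
      ψ ∈ closure ((fun f : C(X, ℝ) => (f : X → ℝ)) '' D) →
      (∀ s ∈ S, φ s = ψ s) → φ = ψ := by
  have := hD.to_subtype
  let π : X → (D → ℝ) := fun x f => f.1 x
  obtain ⟨S, hS, hdense⟩ : ∃ S : Set X, S.Countable ∧ ∀ x, π x ∈ closure (π '' S) := by
    obtain ⟨T, hT, hTc, hTd⟩ :=
      (TopologicalSpace.IsSeparable.of_separableSpace (Set.range π)).exists_countable_dense_subset
    obtain ⟨S, hS, rfl⟩ : ∃ S : Set X, S.Countable ∧ π '' S = T := by
      obtain ⟨S, hS, hinj⟩ := Set.SurjOn.exists_bijOn_subset (f := π) (s := Set.univ) (t := T)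
        (fun y hy => by simpa using hT hy)
      exact ⟨S, Set.MapsTo.countable_of_injOn hinj.mapsTo hinj.injOn hTc, hinj.image_eq⟩
    exact ⟨S, hS, fun x => hTd ⟨x, rfl⟩⟩
  refine ⟨S, hS, fun φ ψ hφc hψc hφ hψ hagree => ?_⟩
  have hsep : ∀ χ : X → ℝ, χ ∈ closure ((fun f : C(X, ℝ) => (f : X → ℝ)) '' D) →
      ∀ x y, π x = π y → χ x = χ y := by
    intro χ hχ x y hxy
    have hcl : IsClosed {g : X → ℝ | g x = g y} :=
      isClosed_eq (continuous_apply x) (continuous_apply y)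
    refine closure_minimal ?_ hcl hχ
    rintro _ ⟨f, hf, rfl⟩
    exact congrFun hxy ⟨f, hf⟩
  have hπ : Continuous π := continuous_pi fun f => f.1.continuous
  funext x
  have hx : π x ∈ π '' closure S := by
    have hcl : IsClosed (π '' closure S) := (isClosed_closure.isCompact.image hπ).isClosed
    exact closure_minimal (Set.image_mono subset_closure) hcl (hdense x)
  obtain ⟨y, hy, hyx⟩ := hx
  rw [← hsep φ hφ y x hyx, ← hsep ψ hψ y x hyx]
  exact closure_minimal (s := S) (t := {z | φ z = ψ z}) hagree (isClosed_eq hφc hψc) hy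

/-- Grothendieck's criterion applied to definability of types (Theorem 5.12): if
`A ⊆ C(X)` is norm-bounded and satisfies the double limit condition over a dense subset
`X₀`, then every pointwise cluster point of `A` is continuous and is the pointwise limit of
an actual sequence from `A`. -/
theorem cluster_point_continuous_and_sequential_limit
    {X : Type*} [TopologicalSpace X] [CompactSpace X] [T2Space X]
    (X₀ : Set X) (hX₀ : Dense X₀) (A : Set C(X, ℝ))
    (hbdd : ∃ C, ∀ f ∈ A, ‖f‖ ≤ C)
    (hdl : ∀ (f : ℕ → C(X, ℝ)) (x : ℕ → X), (∀ n, f n ∈ A) → (∀ m, x m ∈ X₀) →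
      ∀ (L K : ℕ → ℝ) (a b : ℝ),
        (∀ n, Tendsto (fun m => f n (x m)) atTop (nhds (L n))) →
        Tendsto L atTop (nhds a) →
        (∀ m, Tendsto (fun n => f n (x m)) atTop (nhds (K m))) →
        Tendsto K atTop (nhds b) →
        a = b)
    (ψ : X → ℝ)
    (hψ : ψ ∈ closure ((fun f : C(X, ℝ) => (f : X → ℝ)) '' A)) :
    Continuous ψ ∧ ∃ g : ℕ → C(X, ℝ), (∀ k, g k ∈ A) ∧
      ∀ x, Tendsto (fun k => g k x) atTop (nhds (ψ x)) := by
  have hcont := closure_continuous X₀ hX₀ A hbdd hdl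
  refine ⟨hcont ψ hψ, ?_⟩
  obtain ⟨C, hC⟩ := hbdd
  obtain ⟨D, hDA, hDc, hψD⟩ := countable_tight (hcont ψ hψ) hψ
  obtain ⟨S, hS, hSeq⟩ := eq_of_eq_dense D hDc
  have := hS.to_subtype
  let ρ : (X → ℝ) → (S → ℝ) := fun g s => g s
  have hρ : Continuous ρ := by fun_prop
  have hmem : ρ ψ ∈ closure (ρ '' ((fun f : C(X, ℝ) => (f : X → ℝ)) '' D)) :=
    image_closure_subset_closure_image hρ ⟨ψ, hψD, rfl⟩
  obtain ⟨u, hu, hlim⟩ := mem_closure_iff_seq_limit.1 hmem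
  have hu' : ∀ n, ∃ f ∈ D, ρ f = u n := fun n => by
    obtain ⟨_, ⟨f, hf, rfl⟩, h⟩ := hu n
    exact ⟨f, hf, h⟩
  choose g hgD hg using hu'
  refine ⟨g, fun k => hDA (hgD k), fun x => ?_⟩
  rw [tendsto_iff_ultrafilter]
  intro V hV
  have hK : IsCompact (Set.pi Set.univ fun _ : X => Set.Icc (-C) C) :=
    isCompact_univ_pi fun _ => isCompact_Icc
  obtain ⟨φ, -, hφ⟩ := hK.ultrafilter_le_nhds (V.map fun k => (g k : X → ℝ)) (by
    rw [le_principal_iff]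
    refine Filter.mem_map.2 (Filter.univ_mem' fun k y _ => ?_)
    exact bdd_of_closure hC (subset_closure ⟨g k, hDA (hgD k), rfl⟩) y)
  have hφt : Tendsto (fun k => (g k : X → ℝ)) V (𝓝 φ) := hφ
  have hφD : φ ∈ closure ((fun f : C(X, ℝ) => (f : X → ℝ)) '' D) :=
    mem_closure_of_tendsto hφt (Eventually.of_forall fun k => ⟨g k, hgD k, rfl⟩)
  have hφψ : φ = ψ := by
    refine hSeq φ ψ (hcont φ (closure_mono (Set.image_mono hDA) hφD)) (hcont ψ hψ) hφD hψD ?_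
    intro s hs
    refine tendsto_nhds_unique (tendsto_pi_nhds.1 hφt s) ?_
    have h := (tendsto_pi_nhds.1 hlim ⟨s, hs⟩).mono_left hV
    refine h.congr fun k => ?_
    rw [← hg k]
  rw [← hφψ]
  exact tendsto_pi_nhds.1 hφt x
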